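/- Every ERR:LD set of the infinite king grid K has density at least 1/3, and there exists an ERR:LD set of K whose density is at most 7/16. -/

import Mathlib

open scoped symmDiff

variable {V : Type*}

/-- The closed neighborhood `N[v]` of a vertex. -/
def closedNbhd (G : SimpleGraph V) (v : V) : Set V := insert v (G.neighborSet v)

/-- `S` is an error-correcting locating-dominating (ERR:LD) set: conditions (i)-(iv). -/
def IsErrLD (G : SimpleGraph V) (S : Set V) : Prop :=
  (∀ v : V, 3 ≤ (closedNbhd G v ∩ S).encard) ∧
  (∀ v ∈ S, ∀ u ∈ S, u ≠ v →
    1 ≤ ((((G.neighborSet v ∩ S) ∆ (G.neighborSet u ∩ S)) \ {v, u}).encard)) ∧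
  (∀ v ∉ S, ∀ u ∈ S,
    2 ≤ ((((G.neighborSet v ∩ S) ∆ (G.neighborSet u ∩ S)) \ {u}).encard)) ∧
  (∀ v ∉ S, ∀ u ∉ S, u ≠ v →
    3 ≤ (((G.neighborSet v ∩ S) ∆ (G.neighborSet u ∩ S)).encard))

/-- The ball of radius `r` around `v₀` in graph distance. -/
def ballSet (G : SimpleGraph V) (v₀ : V) (r : ℕ) : Set V := {u | G.dist v₀ u ≤ r}

/-- The (upper) density of a vertex set `S`, relative to base vertex `v₀`. -/
noncomputable def density (G : SimpleGraph V) (S : Set V) (v₀ : V) : ℝ :=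
  Filter.limsup (fun r : ℕ =>
    ((S ∩ ballSet G v₀ r).ncard : ℝ) / ((ballSet G v₀ r).ncard : ℝ)) Filter.atTop

/-- The infinite king grid on `ℤ × ℤ`. -/
def kingGrid : SimpleGraph (ℤ × ℤ) :=
  SimpleGraph.fromRel (fun p q => max |p.1 - q.1| |p.2 - q.2| = 1)

/-!
Lower bound: every closed neighborhood of the king grid has nine vertices, at least three of which
lie in `S`. Counting incident pairs between the ball of radius `r` and the part of `S` in the ball
of radius `r + 1` gives `3 |B_r| ≤ 9 |S ∩ B_{r+1}|`, and `|B_r| / |B_{r+1}|` tends to `1`.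

Upper bound: if the detectors at `u` and `v` themselves are counted as well, the three separation
conditions take the same form, namely that three detectors lie in `N(u) ∆ N(v) ∪ {u, v}`. This set
contains `N[u]` when the closed neighborhoods are disjoint, so domination handles all far pairs.
For a set repeating a tile of the `m × m` torus only finitely many configurations remain, and its
density is the proportion of the torus covered by the tile.
-/

open Filter Topology
open scoped Finset

section Graph

variable {G : SimpleGraph V} {S : Set V} {u v v₀ : V}

theorem mem_closedNbhd : u ∈ closedNbhd G v ↔ u = v ∨ G.Adj v u := Iff.rfl

theorem mem_closedNbhd_comm : u ∈ closedNbhd G v ↔ v ∈ closedNbhd G u := by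
  rw [mem_closedNbhd, mem_closedNbhd, eq_comm, G.adj_comm]

theorem self_mem_closedNbhd : v ∈ closedNbhd G v := Set.mem_insert _ _

variable (G) in
/-- The vertices that help to tell `u` from `v`. Including `u` and `v` themselves, even when they
are adjacent, makes up for the different thresholds and exclusions in conditions (ii)-(iv) of
`IsErrLD`: each of these says that at least three vertices of this set lie in `S`. -/
def distinguishingSet (u v : V) : Set V := closedNbhd G u ∆ closedNbhd G v ∪ {u, v}

theorem distinguishingSet_comm (u v : V) :
    distinguishingSet G u v = distinguishingSet G v u := by
  rw [distinguishingSet, distinguishingSet, symmDiff_comm, Set.pair_comm]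

theorem mem_distinguishingSet {w : V} :
    w ∈ distinguishingSet G u v ↔ w = u ∨ w = v ∨ w ∈ G.neighborSet u ∆ G.neighborSet v := by
  simp only [distinguishingSet, Set.mem_union, Set.mem_symmDiff, mem_closedNbhd, Set.mem_insert_iff,
    Set.mem_singleton_iff, SimpleGraph.mem_neighborSet]
  tauto

theorem encard_distinguishingSet_inter (S : Set V) (u v : V) :
    (distinguishingSet G u v ∩ S).encard =
      (((G.neighborSet u ∩ S) ∆ (G.neighborSet v ∩ S)) \ {u, v}).encard
        + ({u, v} ∩ S : Set V).encard := by
  rw [← Set.encard_union_eq]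
  · congr 1
    ext w
    simp only [← Set.inter_symmDiff_distrib_right, Set.mem_union, Set.mem_inter_iff,
      mem_distinguishingSet, Set.mem_sdiff, Set.mem_insert_iff, Set.mem_singleton_iff]
    tauto
  · exact Set.disjoint_sdiff_left.mono_right Set.inter_subset_left

theorem symmDiff_inter_subset (X Y S : Set V) : (X ∩ S) ∆ (Y ∩ S) ⊆ S := by
  rw [← Set.inter_symmDiff_distrib_right]
  exact Set.inter_subset_right

theorem three_le_encard_distinguishingSet_inter_of_mem_of_mem (hu : u ∈ S) (hv : v ∈ S)
    (huv : u ≠ v) : 3 ≤ (distinguishingSet G u v ∩ S).encard ↔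
      1 ≤ (((G.neighborSet u ∩ S) ∆ (G.neighborSet v ∩ S)) \ {u, v}).encard := by
  rw [encard_distinguishingSet_inter, Set.inter_eq_left.2 (Set.pair_subset hu hv),
    Set.encard_pair huv, show (3 : ℕ∞) = 1 + 2 from rfl,
    ENat.add_le_add_iff_right (by decide)]

theorem three_le_encard_distinguishingSet_inter_of_notMem_of_mem (hu : u ∉ S) (hv : v ∈ S) :
    3 ≤ (distinguishingSet G u v ∩ S).encard ↔
      2 ≤ (((G.neighborSet u ∩ S) ∆ (G.neighborSet v ∩ S)) \ {v}).encard := by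
  have hsdiff := Set.sdiff_singleton_eq_self fun h ↦ hu (symmDiff_inter_subset (G.neighborSet u)
    (G.neighborSet v) S h)
  rw [encard_distinguishingSet_inter, Set.insert_inter_of_notMem hu,
    Set.inter_eq_left.2 (Set.singleton_subset_iff.2 hv), Set.encard_singleton, Set.insert_eq,
    ← Set.sdiff_sdiff, hsdiff, show (3 : ℕ∞) = 2 + 1 from rfl,
    ENat.add_le_add_iff_right ENat.one_ne_top]

theorem encard_distinguishingSet_inter_of_notMem_of_notMem (hu : u ∉ S) (hv : v ∉ S) :
    (distinguishingSet G u v ∩ S).encard =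
      ((G.neighborSet u ∩ S) ∆ (G.neighborSet v ∩ S)).encard := by
  have hdisj : Disjoint S {u, v} := by simp [hu, hv]
  rw [encard_distinguishingSet_inter, hdisj.symm.inter_eq, Set.encard_empty, add_zero,
    (hdisj.mono_left (symmDiff_inter_subset _ _ S)).sdiff_eq_left]

theorem isErrLD_iff :
    IsErrLD G S ↔ (∀ v, 3 ≤ (closedNbhd G v ∩ S).encard) ∧
      ∀ u v, u ≠ v → 3 ≤ (distinguishingSet G u v ∩ S).encard := by
  refine and_congr_right fun _ ↦ ⟨fun ⟨hmem, hmixed, hnotMem⟩ u v huv ↦ ?_, fun h ↦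
    ⟨fun v hv u hu huv ↦ ?_, fun v hv u hu ↦ ?_, fun v hv u hu huv ↦ ?_⟩⟩
  · by_cases hu : u ∈ S <;> by_cases hv : v ∈ S
    · exact (three_le_encard_distinguishingSet_inter_of_mem_of_mem hu hv huv).2
        (hmem u hu v hv huv.symm)
    · rw [distinguishingSet_comm]
      exact (three_le_encard_distinguishingSet_inter_of_notMem_of_mem hv hu).2 (hmixed v hv u hu)
    · exact (three_le_encard_distinguishingSet_inter_of_notMem_of_mem hu hv).2 (hmixed u hu v hv)
    · exact (encard_distinguishingSet_inter_of_notMem_of_notMem hu hv).ge.trans'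
        (hnotMem u hu v hv huv.symm)
  · exact (three_le_encard_distinguishingSet_inter_of_mem_of_mem hv hu huv.symm).1
      (h v u huv.symm)
  · exact (three_le_encard_distinguishingSet_inter_of_notMem_of_mem hv hu).1
      (h v u (ne_of_mem_of_not_mem hu hv).symm)
  · exact (h v u huv.symm).trans_eq (encard_distinguishingSet_inter_of_notMem_of_notMem hv hu)

theorem isErrLD_of_forall_not_disjoint (hdom : ∀ v, 3 ≤ (closedNbhd G v ∩ S).encard)
    (hsep : ∀ u v, u ≠ v → ¬ Disjoint (closedNbhd G u) (closedNbhd G v) →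
      3 ≤ (distinguishingSet G u v ∩ S).encard) : IsErrLD G S := by
  refine isErrLD_iff.2 ⟨hdom, fun u v huv ↦ ?_⟩
  by_cases h : Disjoint (closedNbhd G u) (closedNbhd G v)
  · refine (hdom u).trans (Set.encard_le_encard (Set.inter_subset_inter_left S ?_))
    rw [distinguishingSet, h.symmDiff_eq_sup]
    exact Set.subset_union_left.trans Set.subset_union_left
  · exact hsep u v huv h

theorem closedNbhd_subset_ballSet_succ (hG : G.Connected) {r : ℕ} (hv : v ∈ ballSet G v₀ r) :
    closedNbhd G v ⊆ ballSet G v₀ (r + 1) := by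
  rintro u (rfl | huv)
  · exact Nat.le_succ_of_le hv
  · exact (hG.dist_triangle (v := v)).trans
      (add_le_add hv (SimpleGraph.dist_eq_one_iff_adj.2 huv).le)

theorem ballSet_succ_subset_biUnion (hG : G.Connected) (r : ℕ) :
    ballSet G v₀ (r + 1) ⊆ ⋃ v ∈ closedNbhd G v₀, ballSet G v r := by
  intro u hu
  obtain ⟨w, hw⟩ := hG.exists_walk_length_eq_dist v₀ u
  cases w with
  | nil => exact Set.mem_biUnion self_mem_closedNbhd (by simp [ballSet])
  | cons hadj w =>
    refine Set.mem_biUnion (Or.inr hadj) ((SimpleGraph.dist_le w).trans ?_)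
    rw [SimpleGraph.Walk.length_cons] at hw
    exact Nat.succ_le_succ_iff.1 (hw.trans_le hu)

theorem finite_ballSet (hG : G.Connected) (hfin : ∀ v, (closedNbhd G v).Finite) (v₀ : V) (r : ℕ) :
    (ballSet G v₀ r).Finite := by
  induction r generalizing v₀ with
  | zero =>
    refine (Set.finite_singleton v₀).subset fun u hu ↦ ?_
    exact (hG.dist_eq_zero_iff.1 (Nat.le_zero.1 hu)).symm
  | succ r ih => exact ((hfin v₀).biUnion fun v _ ↦ ih v).subset (ballSet_succ_subset_biUnion hG r)

variable {k n : ℕ}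

theorem ncard_ballSet_mul_le (hG : G.Connected) (hn : ∀ v, (closedNbhd G v).encard ≤ n)
    (hS : ∀ v, k ≤ (closedNbhd G v ∩ S).encard) (v₀ : V) (r : ℕ) :
    (ballSet G v₀ r).ncard * k ≤ (S ∩ ballSet G v₀ (r + 1)).ncard * n := by
  classical
  have hfin := finite_ballSet hG (fun v ↦ Set.finite_of_encard_le_coe (hn v)) v₀
  rw [Set.ncard_eq_toFinset_card _ (hfin r),
    Set.ncard_eq_toFinset_card _ ((hfin (r + 1)).inter_of_right S)]
  refine Finset.card_mul_le_card_mul (fun v u ↦ u ∈ closedNbhd G v) (fun v hv ↦ ?_) fun u _ ↦ ?_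
  · rw [← Nat.cast_le (α := ℕ∞), ← Set.encard_coe_eq_coe_finsetCard]
    refine (hS v).trans (Set.encard_le_encard fun u hu ↦ ?_)
    have hu' := closedNbhd_subset_ballSet_succ hG ((hfin r).mem_toFinset.1 hv) hu.1
    simp [hu.1, hu.2, hu']
  · rw [← Nat.cast_le (α := ℕ∞), ← Set.encard_coe_eq_coe_finsetCard]
    refine (Set.encard_le_encard fun v hv ↦ ?_).trans (hn u)
    exact mem_closedNbhd_comm.1 ((Finset.mem_bipartiteBelow _).1 hv).2

theorem ncard_inter_div_ncard_le_one {X : Set V} (hX : X.Finite) (S : Set V) :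
    ((S ∩ X).ncard : ℝ) / X.ncard ≤ 1 :=
  div_le_one_of_le₀ (by exact_mod_cast Set.ncard_inter_le_ncard_right S X hX) (by positivity)

theorem div_le_density (hG : G.Connected) (hn : ∀ v, (closedNbhd G v).encard ≤ n)
    (hS : ∀ v, k ≤ (closedNbhd G v ∩ S).encard)
    (hgrowth : Tendsto
      (fun r ↦ ((ballSet G v₀ r).ncard : ℝ) / (ballSet G v₀ (r + 1)).ncard) atTop (𝓝 1)) :
    (k : ℝ) / n ≤ density G S v₀ := by
  have hfin := finite_ballSet hG (fun v ↦ Set.finite_of_encard_le_coe (hn v)) v₀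
  have hlim := hgrowth.const_mul ((k : ℝ) / n)
  rw [mul_one] at hlim
  rw [density, ← limsup_nat_add _ 1, ← hlim.limsup_eq]
  refine limsup_le_limsup (Eventually.of_forall fun r ↦ ?_) hlim.isCoboundedUnder_le
    (isBoundedUnder_of ⟨1, fun r ↦ ncard_inter_div_ncard_le_one (hfin (r + 1)) S⟩)
  have hcount : ((ballSet G v₀ r).ncard : ℝ) * k ≤ (S ∩ ballSet G v₀ (r + 1)).ncard * n := by
    exact_mod_cast ncard_ballSet_mul_le hG hn hS v₀ r
  simp only [← mul_div_assoc, div_mul_eq_mul_div, mul_comm (k : ℝ)]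
  gcongr
  exact div_le_of_le_mul₀ (by positivity) (by positivity) hcount

end Graph

section KingGrid

variable {u v : ℤ × ℤ}

theorem kingGrid_adj_iff : kingGrid.Adj u v ↔ max |u.1 - v.1| |u.2 - v.2| = 1 := by
  have hne : max |u.1 - v.1| |u.2 - v.2| = 1 → u ≠ v := by
    rintro h rfl
    simp at h
  rw [kingGrid, SimpleGraph.fromRel_adj, abs_sub_comm v.1, abs_sub_comm v.2, or_self]
  exact and_iff_right_of_imp hne

theorem exists_kingGrid_walk_length_eq {n : ℕ} (h : max |u.1 - v.1| |u.2 - v.2| = n) :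
    ∃ w : kingGrid.Walk u v, w.length = n := by
  induction n generalizing u with
  | zero =>
    obtain rfl : u = v := by ext <;> simp only [abs_eq_max_neg] at h <;> omega
    exact ⟨.nil, rfl⟩
  | succ n ih =>
    -- The king's next square is the projection of `u` to the square of radius `n` around `v`.
    let next : ℤ × ℤ := (max (v.1 - n) (min (v.1 + n) u.1), max (v.2 - n) (min (v.2 + n) u.2))
    simp only [abs_eq_max_neg] at h
    have hadj : kingGrid.Adj u next :=
      kingGrid_adj_iff.2 (by simp only [next, abs_eq_max_neg]; omega)
    obtain ⟨w, hw⟩ := ih (u := next) (by simp only [next, abs_eq_max_neg]; omega)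
    exact ⟨.cons hadj w, by rw [SimpleGraph.Walk.length_cons, hw]⟩

theorem max_abs_sub_le_walk_length (w : kingGrid.Walk u v) :
    max |u.1 - v.1| |u.2 - v.2| ≤ w.length := by
  induction w with
  | nil => simp
  | cons hadj w ih =>
    rw [kingGrid_adj_iff] at hadj
    rw [SimpleGraph.Walk.length_cons]
    grind

theorem connected_kingGrid : kingGrid.Connected where
  preconnected _ _ :=
    have ⟨w, _⟩ := exists_kingGrid_walk_length_eq (Int.toNat_of_nonneg (by positivity)).symm
    w.reachable

theorem kingGrid_dist (u v : ℤ × ℤ) :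
    (kingGrid.dist u v : ℤ) = max |u.1 - v.1| |u.2 - v.2| := by
  refine le_antisymm ?_ ?_
  · obtain ⟨n, hn⟩ := Int.eq_ofNat_of_zero_le
      (show 0 ≤ max |u.1 - v.1| |u.2 - v.2| by positivity)
    obtain ⟨w, hw⟩ := exists_kingGrid_walk_length_eq hn
    rw [hn, ← hw]
    exact_mod_cast SimpleGraph.dist_le w
  · obtain ⟨w, hw⟩ := connected_kingGrid.exists_walk_length_eq_dist u v
    exact hw ▸ max_abs_sub_le_walk_length w

theorem ballSet_kingGrid (v : ℤ × ℤ) (r : ℕ) :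
    ballSet kingGrid v r = Set.Icc (v - r) (v + r) := by
  ext u
  rw [ballSet, Set.mem_ofPred_eq, ← Nat.cast_le (α := ℤ), kingGrid_dist]
  simp only [Prod.le_def, sup_le_iff, abs_le, Set.mem_Icc, Prod.fst_sub, Prod.snd_sub, Prod.fst_add,
    Prod.snd_add, Prod.fst_natCast, Prod.snd_natCast]
  omega

theorem closedNbhd_kingGrid (v : ℤ × ℤ) : closedNbhd kingGrid v = Set.Icc (v - 1) (v + 1) := by
  ext u
  rw [mem_closedNbhd, kingGrid_adj_iff]
  simp only [Prod.le_def, Prod.ext_iff, abs_eq_max_neg, Set.mem_Icc, Prod.fst_sub, Prod.snd_sub,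
    Prod.fst_add, Prod.snd_add, Prod.fst_one, Prod.snd_one]
  omega

theorem ncard_ballSet_kingGrid (v : ℤ × ℤ) (r : ℕ) :
    (ballSet kingGrid v r).ncard = (2 * r + 1) ^ 2 := by
  have hcard (a : ℤ) : (Finset.Icc (a - r) (a + r)).card = 2 * r + 1 := by
    rw [Int.card_Icc]
    lia
  rw [ballSet_kingGrid, ← Finset.coe_Icc, Set.ncard_coe_finset, Finset.card_Icc_prod, sq]
  simp [hcard]

theorem encard_closedNbhd_kingGrid (v : ℤ × ℤ) : (closedNbhd kingGrid v).encard = 9 := by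
  have hball : closedNbhd kingGrid v = ballSet kingGrid v 1 := by
    rw [closedNbhd_kingGrid, ballSet_kingGrid, Nat.cast_one]
  rw [hball, ← Set.Finite.cast_ncard_eq, ncard_ballSet_kingGrid]
  · norm_num
  · rw [ballSet_kingGrid]
    exact Set.finite_Icc _ _

theorem tendsto_ncard_ballSet_kingGrid_div_succ (v : ℤ × ℤ) :
    Tendsto (fun r ↦ ((ballSet kingGrid v r).ncard : ℝ) / (ballSet kingGrid v (r + 1)).ncard)
      atTop (𝓝 1) := by
  have h := (tendsto_add_mul_div_add_mul_atTop_nhds (1 : ℝ) 3 2 two_ne_zero).pow 2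
  rw [div_self two_ne_zero, one_pow] at h
  refine h.congr fun r ↦ ?_
  simp only [ncard_ballSet_kingGrid]
  push_cast
  rw [div_pow]
  ring

theorem div_nine_le_density_kingGrid {k : ℕ} {S : Set (ℤ × ℤ)}
    (hS : ∀ v, k ≤ (closedNbhd kingGrid v ∩ S).encard) (v₀ : ℤ × ℤ) :
    (k : ℝ) / 9 ≤ density kingGrid S v₀ :=
  div_le_density (n := 9) connected_kingGrid (fun v ↦ (encard_closedNbhd_kingGrid v).le) hS
    (tendsto_ncard_ballSet_kingGrid_div_succ v₀)

end KingGrid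

section PeriodicSet

variable {m : ℕ}

/-- Coordinatewise reduction `ℤ × ℤ → ZMod m × ZMod m`. -/
def residue (m : ℕ) : ℤ × ℤ →+* ZMod m × ZMod m :=
  (Int.castRingHom (ZMod m)).prodMap (Int.castRingHom (ZMod m))

/-- The subset of the plane with periods `(m, 0)` and `(0, m)` obtained by repeating the tile `T`,
a set of cells of the `m × m` torus. -/
def periodicSet (T : Finset (ZMod m × ZMod m)) : Set (ℤ × ℤ) := {p | residue m p ∈ T}

theorem abs_card_filter_intCast_eq_sub_le [NeZero m] (c : ZMod m) {a b : ℤ} (hab : a ≤ b) :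
    |(#{x ∈ Finset.Ioc a b | ((x : ℤ) : ZMod m) = c} : ℝ) - (b - a) / m| ≤ 1 := by
  obtain ⟨v, rfl⟩ := ZMod.intCast_surjective c
  have hm : (0 : ℤ) < m := by exact_mod_cast NeZero.pos m
  have hcard := Int.Ioc_filter_modEq_card a b hm v
  rw [Int.cast_natCast, max_eq_left (sub_nonneg.2 (by gcongr))] at hcard
  have hlen : ((b - a : ℚ)) / m = (b - v) / m - (a - v) / m := by ring
  suffices |(#{x ∈ Finset.Ioc a b | x ≡ v [ZMOD m]} : ℚ) - (b - a) / m| ≤ 1 by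
    simp only [ZMod.intCast_eq_intCast_iff]
    exact_mod_cast this
  rw [← Int.cast_natCast, hcard, hlen, Int.cast_sub, sub_sub_sub_comm, abs_le]
  constructor <;> linarith [Int.floor_le ((a - v : ℚ) / m), Int.lt_floor_add_one ((a - v : ℚ) / m),
    Int.floor_le ((b - v : ℚ) / m), Int.lt_floor_add_one ((b - v : ℚ) / m)]

theorem tendsto_card_filter_intCast_eq_div [NeZero m] (c : ZMod m) (a : ℤ) :
    Tendsto (fun r : ℕ ↦ (#{x ∈ Finset.Icc (a - r) (a + r) | ((x : ℤ) : ZMod m) = c} : ℝ) /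
      (2 * r + 1)) atTop (𝓝 (1 / m)) := by
  have hlim : Tendsto (fun r : ℕ ↦ 1 / (2 * (r : ℝ) + 1)) atTop (𝓝 0) := by
    simpa [add_comm] using tendsto_add_mul_div_add_mul_atTop_nhds (1 : ℝ) 1 0 two_ne_zero
  refine tendsto_iff_dist_tendsto_zero.2 (squeeze_zero (fun _ ↦ dist_nonneg) (fun r ↦ ?_) hlim)
  have hcount := abs_card_filter_intCast_eq_sub_le c (show a - r - 1 ≤ a + r by lia)
  have hlen : ((a + r : ℤ) - (a - r - 1 : ℤ) : ℝ) = 2 * r + 1 := by push_cast; ring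
  have hpos : (0 : ℝ) < 2 * r + 1 := by positivity
  rw [Finset.Ioc_sub_one_left_eq_Icc, hlen] at hcount
  calc
    _ = |(#{x ∈ Finset.Icc (a - r) (a + r) | ((x : ℤ) : ZMod m) = c} : ℝ) - (2 * r + 1) / m| /
        (2 * r + 1) := by
      rw [Real.dist_eq, ← abs_of_pos hpos, ← abs_div, abs_of_pos hpos]
      field_simp
    _ ≤ 1 / (2 * r + 1) := by gcongr

theorem card_filter_residue_mem (T : Finset (ZMod m × ZMod m)) (u v : ℤ × ℤ) :
    #{p ∈ Finset.Icc u v | residue m p ∈ T} = ∑ c ∈ T,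
      #{x ∈ Finset.Icc u.1 v.1 | ((x : ℤ) : ZMod m) = c.1} *
        #{y ∈ Finset.Icc u.2 v.2 | ((y : ℤ) : ZMod m) = c.2} := by
  rw [Finset.card_eq_sum_card_fiberwise (f := residue m) (t := T) (by simp [Set.MapsTo])]
  refine Finset.sum_congr rfl fun c hc ↦ ?_
  rw [← Finset.card_product, ← Finset.filter_product, Finset.filter_filter]
  congr 1
  ext p
  have hp : residue m p ∈ T ∧ residue m p = c ↔ (p.1 : ZMod m) = c.1 ∧ (p.2 : ZMod m) = c.2 := by
    rw [and_iff_right_of_imp fun h ↦ h ▸ hc]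
    exact Prod.ext_iff
  rw [Finset.mem_filter, Finset.mem_filter, hp]
  rfl

theorem density_kingGrid_periodicSet [NeZero m] (T : Finset (ZMod m × ZMod m)) (v₀ : ℤ × ℤ) :
    density kingGrid (periodicSet T) v₀ = T.card / (m : ℝ) ^ 2 := by
  have hlim := tendsto_finsetSum T fun c _ ↦ (tendsto_card_filter_intCast_eq_div c.1 v₀.1).mul
    (tendsto_card_filter_intCast_eq_div c.2 v₀.2)
  have hcard (r : ℕ) : (periodicSet T ∩ ballSet kingGrid v₀ r).ncard =
      #{p ∈ Finset.Icc (v₀ - r) (v₀ + r) | residue m p ∈ T} := by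
    rw [ballSet_kingGrid, ← Set.ncard_coe_finset, Finset.coe_filter, Set.inter_comm]
    simp [periodicSet, Set.inter_def]
  rw [Finset.sum_const, nsmul_eq_mul, one_div_mul_one_div, ← sq, mul_one_div] at hlim
  rw [density, ← hlim.limsup_eq]
  congr 1 with r
  rw [hcard, card_filter_residue_mem, ncard_ballSet_kingGrid]
  push_cast
  simp [Finset.sum_div, div_mul_div_comm, sq]

theorem encard_image_add_inter_periodicSet (T : Finset (ZMod m × ZMod m)) (v : ℤ × ℤ)
    (F : Finset (ℤ × ℤ)) : ((v + ·) '' (F : Set (ℤ × ℤ)) ∩ periodicSet T).encard =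
      #{p ∈ F | residue m v + residue m p ∈ T} := by
  rw [← Set.image_inter_preimage, (add_right_injective v).encard_image,
    ← Set.encard_coe_eq_coe_finsetCard, Finset.coe_filter]
  simp [periodicSet, Set.inter_def]

theorem sub_mem_Icc_of_not_disjoint_closedNbhd_kingGrid {u v : ℤ × ℤ}
    (h : ¬ Disjoint (closedNbhd kingGrid u) (closedNbhd kingGrid v)) :
    v - u ∈ Finset.Icc (-2) 2 := by
  obtain ⟨w, ⟨huw, hwu⟩, ⟨hvw, hwv⟩⟩ := by
    simpa only [Set.not_disjoint_iff, closedNbhd_kingGrid] using h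
  simp only [Finset.mem_Icc, Prod.le_def, Prod.fst_sub, Prod.snd_sub, Prod.fst_add, Prod.snd_add,
    Prod.fst_one, Prod.snd_one, Prod.fst_neg, Prod.snd_neg, Prod.fst_ofNat, Prod.snd_ofNat] at *
  omega

theorem closedNbhd_kingGrid_eq_image (v : ℤ × ℤ) :
    closedNbhd kingGrid v = (v + ·) '' (Finset.Icc (-1) 1 : Finset (ℤ × ℤ)) := by
  rw [closedNbhd_kingGrid, Finset.coe_Icc, Set.image_const_add_Icc, sub_eq_add_neg]

theorem distinguishingSet_kingGrid_eq_image (v d : ℤ × ℤ) :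
    distinguishingSet kingGrid v (v + d) = (v + ·) ''
      (Finset.Icc (-1) 1 ∆ Finset.Icc (d - 1) (d + 1) ∪ {0, d} : Finset (ℤ × ℤ)) := by
  simp only [distinguishingSet, closedNbhd_kingGrid, Finset.coe_union, Finset.coe_symmDiff,
    Finset.coe_Icc, Finset.coe_pair, Set.image_union, Set.image_symmDiff (add_right_injective v),
    Set.image_const_add_Icc, Set.image_pair, add_zero, ← sub_eq_add_neg, add_assoc, add_sub_assoc]

theorem isErrLD_kingGrid_periodicSet {T : Finset (ZMod m × ZMod m)}
    (hdom : ∀ c, 3 ≤ #{p ∈ Finset.Icc (-1) 1 | c + residue m p ∈ T})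
    (hsep : ∀ c, ∀ d ∈ Finset.Icc (-2) 2, d ≠ 0 →
      3 ≤ #{p ∈ Finset.Icc (-1) 1 ∆ Finset.Icc (d - 1) (d + 1) ∪ {0, d} |
        c + residue m p ∈ T}) :
    IsErrLD kingGrid (periodicSet T) := by
  refine isErrLD_of_forall_not_disjoint (fun v ↦ ?_) fun u v huv hdisj ↦ ?_
  · rw [closedNbhd_kingGrid_eq_image, encard_image_add_inter_periodicSet]
    exact_mod_cast hdom (residue m v)
  · rw [← add_sub_cancel u v, distinguishingSet_kingGrid_eq_image,
      encard_image_add_inter_periodicSet]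
    exact_mod_cast hsep (residue m u) (v - u)
      (sub_mem_Icc_of_not_disjoint_closedNbhd_kingGrid hdisj) (sub_ne_zero.2 huv.symm)

end PeriodicSet

/-- Seven of the sixteen cells of the `4 × 4` torus, arranged as
```
y = 3   . . . X
y = 2   X . X .
y = 1   . X . .
y = 0   X X X .
```
-/
def kingTile : Finset (ZMod 4 × ZMod 4) := {(0, 0), (1, 0), (2, 0), (1, 1), (0, 2), (2, 2), (3, 3)}

theorem isErrLD_kingGrid_periodicSet_kingTile : IsErrLD kingGrid (periodicSet kingTile) :=
  isErrLD_kingGrid_periodicSet (hdom := by decide +kernel) (hsep := by decide +kernel)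

theorem errLD_density_king_general :
    (∀ (k : ℕ) (S : Set (ℤ × ℤ)), (∀ v, k ≤ (closedNbhd kingGrid v ∩ S).encard) →
      ∀ v₀, (k : ℝ) / 9 ≤ density kingGrid S v₀) ∧
    ∃ S : Set (ℤ × ℤ), IsErrLD kingGrid S ∧ ∀ v₀, density kingGrid S v₀ = 7 / 16 := by
  refine ⟨fun k S hS ↦ div_nine_le_density_kingGrid hS, periodicSet kingTile,
    isErrLD_kingGrid_periodicSet_kingTile, fun v₀ ↦ ?_⟩
  rw [density_kingGrid_periodicSet, show #kingTile = 7 from rfl]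
  norm_num

theorem errLD_density_king :
    (∀ S : Set (ℤ × ℤ), IsErrLD kingGrid S →
      (1 : ℝ) / 3 ≤ density kingGrid S ((0 : ℤ), (0 : ℤ))) ∧
    (∃ S : Set (ℤ × ℤ), IsErrLD kingGrid S ∧
      density kingGrid S ((0 : ℤ), (0 : ℤ)) ≤ (7 : ℝ) / 16) := by
  obtain ⟨lower, S, hS, hdensity⟩ := errLD_density_king_general
  exact ⟨fun S hS ↦ (by norm_num : (1 : ℝ) / 3 = (3 : ℕ) / 9).trans_le (lower 3 S hS.1 _),
    S, hS, (hdensity _).le⟩
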